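/- Let α ≥ 1 and let d be the Carnot–Carathéodory distance on ℝ³ induced by X₁ and X₂. There exist constants c, C > 0 depending only on α such that for all (x,y), (x′,y′) ∈ ℝ² one has c ( |x − x′| + |y − y′| + |x|^{1/2} |y′ − y|^{1/2} ) ≤ d( (x,y,0), (x′,y′,0) ) ≤ C ( |x − x′| + |y − y′| + |x|^{1/2} |y′ − y|^{1/2} ). -/

import Mathlib

open MeasureTheory

/-- The minimum appearing in the quasi-distance `δ`, with the conventions of the paper:
it equals `|ζ| ^ (1/(α+1))` when `x = 0` (and it is `0` when `ζ = 0`). -/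
noncomputable def ccMin (α x ζ : ℝ) : ℝ :=
  if x = 0 then |ζ| ^ (1 / (α + 1))
  else min (|ζ| ^ (1 / (α + 1))) (|ζ| ^ ((1 : ℝ) / 2) / |x| ^ ((α - 1) / 2))

/-- A horizontal curve on `[0,T]` for the vector fields `X₁ = ∂ₓ`, `X₂ = ∂_y + |x|^α ∂_z`:
a Lipschitz curve whose components have a.e. derivatives `(h₁, h₂, |x|^α h₂)` with
`h₁² + h₂² ≤ 1`. -/
def IsHorizontal (α T : ℝ) (γ : ℝ → ℝ × ℝ × ℝ) : Prop :=
  (∃ K, LipschitzOnWith K γ (Set.Icc 0 T)) ∧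
  ∃ h₁ h₂ : ℝ → ℝ, Measurable h₁ ∧ Measurable h₂ ∧
    (∀ t, (h₁ t) ^ 2 + (h₂ t) ^ 2 ≤ 1) ∧
    ∀ᵐ t ∂(volume.restrict (Set.Ioo 0 T)),
      HasDerivAt (fun s => (γ s).1) (h₁ t) t ∧
      HasDerivAt (fun s => (γ s).2.1) (h₂ t) t ∧
      HasDerivAt (fun s => (γ s).2.2) (|(γ t).1| ^ α * h₂ t) t

/-- The Carnot–Carathéodory distance associated with `X₁, X₂`. -/
noncomputable def ccDist (α : ℝ) (p q : ℝ × ℝ × ℝ) : ℝ :=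
  sInf {T : ℝ | 0 < T ∧ ∃ γ : ℝ → ℝ × ℝ × ℝ, IsHorizontal α T γ ∧ γ 0 = p ∧ γ T = q}

/-- The Carnot–Carathéodory ball. -/
def ccBall (α : ℝ) (p : ℝ × ℝ × ℝ) (r : ℝ) : Set (ℝ × ℝ × ℝ) :=
  {q | ccDist α p q < r}

/-- The algebraic quasi-distance `δ`. -/
noncomputable def deltaDist (α : ℝ) (p q : ℝ × ℝ × ℝ) : ℝ :=
  |q.1 - p.1| + |q.2.1 - p.2.1| +
    ccMin α p.1 (p.2.2 - q.2.2 + |p.1| ^ α * (q.2.1 - p.2.1))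

/-- The perimeter measure `μ = |x|^α ℒ²` on the plane `z = 0`, identified with `ℝ²`. -/
noncomputable def planeMeasure (α : ℝ) : Measure (ℝ × ℝ) :=
  volume.withDensity (fun u => ENNReal.ofReal (|u.1| ^ α))

/-- A Lipschitz function with a.e. bounded derivative has bounded increment. -/
theorem lip_increment_bound {f : ℝ → ℝ} {K : NNReal} {T B : ℝ} (hT : 0 ≤ T)
    (hf : LipschitzOnWith K f (Set.Icc 0 T))
    (hB : ∀ᵐ t ∂(volume.restrict (Set.Ioo 0 T)), ∃ m, HasDerivAt f m t ∧ |m| ≤ B)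
    {s : ℝ} (hs : 0 ≤ s) (hsT : s ≤ T) : |f s - f 0| ≤ B * s := by
  have hac : AbsolutelyContinuousOnInterval f 0 s := by
    apply LipschitzOnWith.absolutelyContinuousOnInterval (K := K)
    rw [Set.uIcc_of_le hs]
    exact hf.mono (Set.Icc_subset_Icc le_rfl hsT)
  rw [← hac.integral_deriv_eq_sub]
  have hne : ∀ᵐ t : ℝ, t ≠ s := by
    simp [ae_iff]
  have := intervalIntegral.norm_integral_le_of_norm_le_const_ae (a := 0) (b := s) (C := B)
    (f := deriv f) ?_
  · simpa [abs_of_nonneg hs] using this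
  · rw [ae_restrict_iff' measurableSet_Ioo] at hB
    filter_upwards [hB, hne] with t ht htne hts
    rw [Set.uIoc_of_le hs] at hts
    obtain ⟨m, hm, hmB⟩ := ht ⟨hts.1, lt_of_lt_of_le (lt_of_le_of_ne hts.2 htne) hsT⟩
    rw [hm.deriv]
    simpa using hmB

theorem rpow_sub_bound {α a b M : ℝ} (hα : 1 ≤ α) (ha : 0 ≤ a) (hb : 0 ≤ b)
    (haM : a ≤ M) (hbM : b ≤ M) :
    |a ^ α - b ^ α| ≤ α * M ^ (α - 1) * |a - b| := by
  have := (convex_Icc (0:ℝ) M).norm_image_sub_le_of_norm_hasDerivWithin_le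
    (f := fun t : ℝ => t ^ α) (f' := fun t : ℝ => α * t ^ (α - 1)) (C := α * M ^ (α - 1))
    (x := b) (y := a)
    (fun t _ => (Real.hasDerivAt_rpow_const (Or.inr hα)).hasDerivWithinAt)
    (fun t ht => by
      have h1 : 0 ≤ t ^ (α - 1) := Real.rpow_nonneg ht.1 _
      rw [Real.norm_eq_abs, abs_of_nonneg (by positivity)]
      have h2 : t ^ (α - 1) ≤ M ^ (α - 1) := Real.rpow_le_rpow ht.1 ht.2 (by linarith)
      gcongr) ⟨hb, hbM⟩ ⟨ha, haM⟩
  simpa using this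

theorem horizontal_lower {α T x y x' y' : ℝ} (hα : 1 ≤ α) (hT : 0 < T) {γ : ℝ → ℝ × ℝ × ℝ}
    (hγ : IsHorizontal α T γ) (h0 : γ 0 = (x, y, 0)) (h1 : γ T = (x', y', 0)) :
    |x - x'| ≤ T ∧ |y - y'| ≤ T ∧ |x| * |y' - y| ≤ α * 2 ^ (α - 1) * T ^ 2 := by
  obtain ⟨⟨K, hK⟩, k₁, k₂, -, -, hk, hd⟩ := hγ
  have hk1 : ∀ t, |k₁ t| ≤ 1 := fun t => by
    rw [← sq_le_one_iff_abs_le_one]; nlinarith [hk t, sq_nonneg (k₂ t)]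
  have hk2 : ∀ t, |k₂ t| ≤ 1 := fun t => by
    rw [← sq_le_one_iff_abs_le_one]; nlinarith [hk t, sq_nonneg (k₁ t)]
  have L1 := LipschitzWith.prod_fst.comp_lipschitzOnWith hK
  have L23 := LipschitzWith.prod_snd.comp_lipschitzOnWith hK
  have L2 := LipschitzWith.prod_fst.comp_lipschitzOnWith L23
  have L3 := LipschitzWith.prod_snd.comp_lipschitzOnWith L23
  have X : ∀ s, 0 ≤ s → s ≤ T → |(γ s).1 - x| ≤ s := fun s hs hsT => by
    have := lip_increment_bound hT.le L1 (B := 1) (by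
      filter_upwards [hd] with t ht
      exact ⟨_, ht.1, hk1 t⟩) hs hsT
    simpa [h0] using this
  have Y : |y' - y| ≤ T := by
    have := lip_increment_bound hT.le L2 (B := 1) (by
      filter_upwards [hd] with t ht
      exact ⟨_, ht.2.1, hk2 t⟩) hT.le le_rfl
    simpa [h0, h1] using this
  have hX := X T hT.le le_rfl
  rw [h1] at hX
  refine ⟨by rw [abs_sub_comm]; exact hX, by rw [abs_sub_comm]; exact Y, ?_⟩
  have h2 : (1:ℝ) ≤ 2 ^ (α - 1) := Real.one_le_rpow (by norm_num) (by linarith)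
  have hK1 : 1 ≤ α * 2 ^ (α - 1) := by nlinarith
  rcases le_or_gt |x| T with hxT | hxT
  · have : |x| * |y' - y| ≤ T * T := mul_le_mul hxT Y (abs_nonneg _) hT.le
    nlinarith [sq_nonneg T]
  · have hx0 : 0 < |x| := hT.trans hxT
    have LW : ∃ K', LipschitzOnWith K' (fun t => |x| ^ α * (γ t).2.1 - (γ t).2.2)
        (Set.Icc 0 T) := by
      have a1 := (lipschitzWith_smul (β := ℝ) (|x| ^ α)).comp_lipschitzOnWith L2
      exact ⟨_, a1.sub L3⟩
    obtain ⟨K', LW⟩ := LW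
    have key := lip_increment_bound hT.le LW (B := α * (2 * |x|) ^ (α - 1) * T) (by
      filter_upwards [hd, ae_restrict_mem measurableSet_Ioo] with t ht htm
      refine ⟨_, (ht.2.1.const_mul (|x| ^ α)).sub ht.2.2, ?_⟩
      rw [← sub_mul, abs_mul]
      have hXt := X t htm.1.le htm.2.le
      have e1 : |(|x| - |(γ t).1|)| ≤ T := by
        rw [abs_sub_comm]
        exact (abs_abs_sub_abs_le_abs_sub _ _).trans (hXt.trans htm.2.le)
      have e2 : |(γ t).1| ≤ 2 * |x| := by
        have := (abs_le.1 e1).1; linarith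
      have e3 := rpow_sub_bound hα (abs_nonneg x) (abs_nonneg (γ t).1) (M := 2 * |x|)
        (by linarith) e2
      calc _ ≤ |(|x| ^ α - |(γ t).1| ^ α)| * 1 := by gcongr; exact hk2 t
        _ ≤ α * (2 * |x|) ^ (α - 1) * |(|x| - |(γ t).1|)| := by simpa using e3
        _ ≤ _ := by gcongr) hT.le le_rfl
    simp only [h0, h1, sub_zero] at key
    rw [← mul_sub, abs_mul, abs_of_nonneg (by positivity : (0:ℝ) ≤ |x| ^ α),
      Real.mul_rpow (by norm_num) hx0.le] at key
    have e : |x| ^ α = |x| ^ (α - 1) * |x| := by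
      rw [← Real.rpow_add_one hx0.ne']; congr 1; ring
    rw [e] at key
    have hp : 0 < |x| ^ (α - 1) := by positivity
    refine le_of_mul_le_mul_left ?_ hp
    nlinarith [key]

/-- Reachability with curves that are constant outside `[0,T]`. -/
def Reach (α T : ℝ) (p q : ℝ × ℝ × ℝ) : Prop :=
  0 ≤ T ∧ ∃ γ : ℝ → ℝ × ℝ × ℝ, (∃ K, LipschitzWith K γ) ∧ (∀ t ≤ 0, γ t = p) ∧
    (∀ t, T ≤ t → γ t = q) ∧
    ∃ h₁ h₂ : ℝ → ℝ, Measurable h₁ ∧ Measurable h₂ ∧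
    (∀ t, (h₁ t) ^ 2 + (h₂ t) ^ 2 ≤ 1) ∧
    ∀ᵐ t,
      HasDerivAt (fun s => (γ s).1) (h₁ t) t ∧
      HasDerivAt (fun s => (γ s).2.1) (h₂ t) t ∧
      HasDerivAt (fun s => (γ s).2.2) (|(γ t).1| ^ α * h₂ t) t

theorem Reach.mem {α T T' : ℝ} {p q : ℝ × ℝ × ℝ} (h : Reach α T p q) (hT : T < T') :
    T' ∈ {T : ℝ | 0 < T ∧ ∃ γ : ℝ → ℝ × ℝ × ℝ, IsHorizontal α T γ ∧ γ 0 = p ∧ γ T = q} := by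
  obtain ⟨h0, γ, ⟨K, hK⟩, a, b, h₁, h₂, m₁, m₂, hh, hd⟩ := h
  exact ⟨h0.trans_lt hT, γ, ⟨⟨K, hK.lipschitzOnWith⟩, h₁, h₂, m₁, m₂, hh,
    ae_restrict_of_ae hd⟩, a 0 le_rfl, b _ hT.le⟩

theorem Reach.ccDist_le {α T : ℝ} {p q : ℝ × ℝ × ℝ} (h : Reach α T p q) :
    ccDist α p q ≤ T := by
  refine le_of_forall_pos_le_add fun ε hε => ?_
  exact csInf_le ⟨0, fun t ht => ht.1.le⟩ (h.mem (by linarith))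

theorem Reach.trans {α T S : ℝ} {p q r : ℝ × ℝ × ℝ} (h : Reach α T p q)
    (h' : Reach α S q r) : Reach α (T + S) p r := by
  obtain ⟨hT, γ, ⟨K, hK⟩, a, b, h₁, h₂, m₁, m₂, hh, hd⟩ := h
  obtain ⟨hS, γ', ⟨K', hK'⟩, a', b', h₁', h₂', m₁', m₂', hh', hd'⟩ := h'
  have hd'' : ∀ᵐ t : ℝ, 
      HasDerivAt (fun s => (γ' s).1) (h₁' (t - T)) (t - T) ∧
      HasDerivAt (fun s => (γ' s).2.1) (h₂' (t - T)) (t - T) ∧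
      HasDerivAt (fun s => (γ' s).2.2) (|(γ' (t - T)).1| ^ α * h₂' (t - T)) (t - T) :=
    (measurePreserving_sub_right volume T).quasiMeasurePreserving.ae hd'
  have hne : ∀ᵐ t : ℝ, t ≠ T := by simp [ae_iff]
  set G : ℝ → ℝ × ℝ × ℝ := fun t => γ t + (γ' (t - T) - q) with hG
  have Gl : ∀ t, t ≤ T → G t = γ t := fun t ht => by
    simp [hG, a' (t - T) (by linarith)]
  have Gr : ∀ t, T ≤ t → G t = γ' (t - T) := fun t ht => by
    simp [hG, b t ht]
  refine ⟨by linarith, G, ?_, ?_, ?_, fun t => if t < T then h₁ t else h₁' (t - T),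
    fun t => if t < T then h₂ t else h₂' (t - T), ?_, ?_, ?_, ?_⟩
  · have e : LipschitzWith 1 (fun t : ℝ => t - T) := by
      apply LipschitzWith.of_dist_le_mul; intro u v; simp
    exact ⟨_, hK.add ((hK'.comp e).sub (LipschitzWith.const q))⟩
  · intro t ht
    rw [Gl t (by linarith), a t ht]
  · intro t ht
    rw [Gr t (by linarith), b' _ (by linarith)]
  · exact Measurable.ite measurableSet_Iio m₁ (m₁'.comp (measurable_id.sub_const T))
  · exact Measurable.ite measurableSet_Iio m₂ (m₂'.comp (measurable_id.sub_const T))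
  · intro t
    by_cases ht : t < T
    · simpa [ht] using hh t
    · simpa [ht] using hh' (t - T)
  · filter_upwards [hd, hd'', hne] with t k k' hn
    rcases lt_or_gt_of_ne hn with ht | ht
    · have ev : G =ᶠ[nhds t] γ := by
        filter_upwards [Iio_mem_nhds ht] with s hs using Gl s (le_of_lt hs)
      simp only [ht, if_true, Gl t ht.le]
      exact ⟨k.1.congr_of_eventuallyEq (ev.fun_comp (fun w => w.1)),
        k.2.1.congr_of_eventuallyEq (ev.fun_comp (fun w => w.2.1)),
        k.2.2.congr_of_eventuallyEq (ev.fun_comp (fun w => w.2.2))⟩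
    · have ev : G =ᶠ[nhds t] fun s => γ' (s - T) := by
        filter_upwards [Ioi_mem_nhds ht] with s hs using Gr s (le_of_lt hs)
      simp only [not_lt.2 ht.le, if_false, Gr t ht.le]
      exact ⟨(k'.1.comp_sub_const t T).congr_of_eventuallyEq (ev.fun_comp (fun w => w.1)),
        (k'.2.1.comp_sub_const t T).congr_of_eventuallyEq (ev.fun_comp (fun w => w.2.1)),
        (k'.2.2.comp_sub_const t T).congr_of_eventuallyEq (ev.fun_comp (fun w => w.2.2))⟩

theorem clamp_deriv {T t : ℝ} (hT : 0 ≤ T) (h0 : t ≠ 0) (h1 : t ≠ T) :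
    HasDerivAt (fun s : ℝ => max 0 (min s T)) (if 0 < t ∧ t < T then 1 else 0) t := by
  rcases lt_or_gt_of_ne h0 with h | h
  · rw [if_neg (by intro h'; linarith [h'.1])]
    refine (hasDerivAt_const t (0:ℝ)).congr_of_eventuallyEq ?_
    filter_upwards [Iio_mem_nhds h] with s hs
    exact max_eq_left ((min_le_left _ _).trans (le_of_lt hs))
  rcases lt_or_gt_of_ne h1 with h' | h'
  · rw [if_pos ⟨h, h'⟩]
    refine (hasDerivAt_id t).congr_of_eventuallyEq ?_
    filter_upwards [Iio_mem_nhds h', Ioi_mem_nhds h] with s hs hs'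
    rw [min_eq_left (le_of_lt hs), max_eq_right (le_of_lt hs')]; rfl
  · rw [if_neg (by intro h'; linarith [h'.2])]
    refine (hasDerivAt_const t T).congr_of_eventuallyEq ?_
    filter_upwards [Ioi_mem_nhds h'] with s hs
    rw [min_eq_right (le_of_lt hs), max_eq_right hT]

theorem reach_line {α T a b : ℝ} (hT : 0 ≤ T) (hab : a * b = 0) (hab' : a ^ 2 + b ^ 2 ≤ 1)
    (x y z : ℝ) : Reach α T (x, y, z) (x + a * T, y + b * T, z + |x| ^ α * b * T) := by
  have lc : LipschitzWith 1 (fun s : ℝ => max 0 (min s T)) :=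
    (LipschitzWith.id.min_const T).const_max 0
  have lm : ∀ u v : ℝ, ∃ K, LipschitzWith K (fun s : ℝ => u + v * max 0 (min s T)) :=
    fun u v => ⟨_, (LipschitzWith.const u).add ((lipschitzWith_smul (β := ℝ) v).comp lc)⟩
  obtain ⟨K1, l1⟩ := lm x a
  obtain ⟨K2, l2⟩ := lm y b
  obtain ⟨K3, l3⟩ := lm z (|x| ^ α * b)
  have n0 : ∀ᵐ t : ℝ, t ≠ 0 := by simp [ae_iff]
  have nT : ∀ᵐ t : ℝ, t ≠ T := by simp [ae_iff]
  refine ⟨hT, fun s => (x + a * max 0 (min s T), y + b * max 0 (min s T),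
    z + |x| ^ α * b * max 0 (min s T)), ⟨_, l1.prodMk (l2.prodMk l3)⟩, ?_, ?_,
    fun t => a * (if 0 < t ∧ t < T then 1 else 0),
    fun t => b * (if 0 < t ∧ t < T then 1 else 0), ?_, ?_, ?_, ?_⟩
  · intro t ht
    have : max 0 (min t T) = 0 := max_eq_left ((min_le_left _ _).trans ht)
    simp [this]
  · intro t ht
    have : max 0 (min t T) = T := by rw [min_eq_right ht, max_eq_right hT]
    simp [this]
  · exact (Measurable.ite measurableSet_Ioo measurable_const measurable_const).const_mul a
  · exact (Measurable.ite measurableSet_Ioo measurable_const measurable_const).const_mul b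
  · intro t
    by_cases hc : 0 < t ∧ t < T <;> simp [hc, hab']
  · filter_upwards [n0, nT] with t h0 h1
    have hd := clamp_deriv hT h0 h1
    refine ⟨(hd.const_mul a).const_add x, (hd.const_mul b).const_add y, ?_⟩
    have := (hd.const_mul (|x| ^ α * b)).const_add z
    have e : |x + a * max 0 (min t T)| ^ α * (b * if 0 < t ∧ t < T then 1 else 0) =
        |x| ^ α * b * if 0 < t ∧ t < T then 1 else 0 := by
      rcases mul_eq_zero.1 hab with h | h
      · rw [h, zero_mul, add_zero, mul_assoc]
      · rw [h, zero_mul, mul_zero, mul_zero, zero_mul]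
    exact e ▸ this

theorem reach_x (α x x' y z : ℝ) : Reach α |x - x'| (x, y, z) (x', y, z) := by
  rcases le_total x x' with h | h
  · have := reach_line (α := α) (a := 1) (b := 0) (abs_nonneg (x - x')) (by simp) (by simp) x y z
    rw [abs_of_nonpos (by linarith)] at this ⊢
    simpa using this
  · have := reach_line (α := α) (a := -1) (b := 0) (abs_nonneg (x - x')) (by simp) (by simp) x y z
    rw [abs_of_nonneg (by linarith)] at this ⊢
    simpa using this

theorem reach_y (α x y z v : ℝ) : Reach α |v| (x, y, z) (x, y + v, z + |x| ^ α * v) := by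
  rcases le_total 0 v with h | h
  · have := reach_line (α := α) (a := 0) (b := 1) (abs_nonneg v) (by simp) (by simp) x y z
    rw [abs_of_nonneg h] at this ⊢
    simpa using this
  · have := reach_line (α := α) (a := 0) (b := -1) (abs_nonneg v) (by simp) (by simp) x y z
    rw [abs_of_nonpos h] at this ⊢
    simpa using this

theorem reach_upper {α : ℝ} (hα : 1 ≤ α) (x y x' y' R : ℝ) (hR : 0 ≤ R)
    (hR2 : R ^ 2 = |x| * |y' - y|) :
    ∃ T ≤ (2 ^ α + 3) * (|x - x'| + |y - y'| + R), Reach α T (x, y, 0) (x', y', 0) := by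
  have h2 : (1:ℝ) ≤ 2 ^ α := Real.one_le_rpow (by norm_num) (by linarith)
  have p1 := abs_nonneg (x - x')
  have p2 := abs_nonneg (y - y')
  have hyy : |y - y'| = |y' - y| := abs_sub_comm _ _
  by_cases hD : y' = y
  · subst hD
    exact ⟨_, by nlinarith, reach_x α x x' y' 0⟩
  have hΔ : 0 < |y' - y| := abs_pos.2 (sub_ne_zero.2 hD)
  rcases le_or_gt |x| |y' - y| with hc | hc
  · have hxR : |x| ≤ R := by
      apply abs_le_of_sq_le_sq' _ hR |>.2
      nlinarith [abs_nonneg x]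
    have r1 := reach_x α x 0 y 0
    have r2 := reach_y α 0 y 0 (y' - y)
    have r3 := reach_x α 0 x' y' 0
    have e0 : (0:ℝ) ^ α = 0 := Real.zero_rpow (by linarith)
    simp only [abs_zero, e0, zero_mul, add_zero, add_sub_cancel] at r2
    refine ⟨_, ?_, (r1.trans r2).trans r3⟩
    have : |0 - x'| ≤ |x| + |x - x'| := by
      have := abs_sub_abs_le_abs_sub x' x
      rw [abs_sub_comm x' x] at this
      simp only [zero_sub, abs_neg]; linarith
    simp only [sub_zero]
    nlinarith
  · have hx : 0 < |x| := hΔ.trans hc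
    have hRpos : 0 < R := by
      rcases hR.lt_or_eq with h | h
      · exact h
      · rw [← h] at hR2; nlinarith [mul_pos hx hΔ]
    have hRx : R ≤ |x| := by
      apply abs_le_of_sq_le_sq' _ hx.le |>.2
      nlinarith
    -- the second abscissa
    obtain ⟨u, hu1, hu2⟩ : ∃ u, |u| = |x| + R ∧ |x - u| = R := by
      rcases le_total 0 x with h | h
      · refine ⟨x + R, ?_, ?_⟩
        · rw [abs_of_nonneg h, abs_of_nonneg (by linarith)]
        · rw [sub_add_cancel_left, abs_neg, abs_of_pos hRpos]
      · refine ⟨x - R, ?_, ?_⟩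
        · rw [abs_of_nonpos h, abs_of_nonpos (by linarith)]; ring
        · rw [sub_sub_cancel, abs_of_pos hRpos]
    set A := |x| ^ α with hA
    set B := |u| ^ α with hB
    set P := |x| ^ (α - 1) with hP
    have hPpos : 0 < P := by positivity
    have hAP : A = P * |x| := by
      rw [hA, hP, ← Real.rpow_add_one hx.ne']; congr 1; ring
    have hApos : 0 < A := by positivity
    have hBA : P * R ≤ B - A := by
      have hupos : 0 < |u| := by rw [hu1]; positivity
      have : B = |u| ^ (α - 1) * |u| := by
        rw [hB, ← Real.rpow_add_one hupos.ne']; congr 1; ring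
      have h3 : P ≤ |u| ^ (α - 1) :=
        Real.rpow_le_rpow hx.le (by linarith) (by linarith)
      rw [this, hAP, hu1] at *
      nlinarith
    have hBle : B ≤ 2 ^ α * A := by
      rw [hA, ← Real.mul_rpow (by norm_num) hx.le]
      exact Real.rpow_le_rpow (abs_nonneg u) (by linarith) (by linarith)
    have hDpos : 0 < B - A := lt_of_lt_of_le (by positivity) hBA
    have hkey : A * |y' - y| ≤ R * (B - A) := by
      calc A * |y' - y| = R * (P * R) := by rw [hAP]; linear_combination (-P) * hR2
        _ ≤ _ := by gcongr
    have b1 : |B * (y' - y) / (B - A)| ≤ 2 ^ α * R := by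
      rw [abs_div, abs_mul, abs_of_pos hDpos, abs_of_nonneg (by linarith : 0 ≤ B),
        div_le_iff₀ hDpos]
      calc B * |y' - y| ≤ 2 ^ α * A * |y' - y| := by gcongr
        _ = 2 ^ α * (A * |y' - y|) := by ring
        _ ≤ 2 ^ α * (R * (B - A)) := by gcongr
        _ = _ := by ring
    have b2 : |-(A * (y' - y) / (B - A))| ≤ R := by
      rw [abs_neg, abs_div, abs_mul, abs_of_pos hDpos, abs_of_pos hApos, div_le_iff₀ hDpos]
      exact hkey
    have r1 := reach_y α x y 0 (B * (y' - y) / (B - A))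
    have r2 := reach_x α x u (y + B * (y' - y) / (B - A)) (0 + A * (B * (y' - y) / (B - A)))
    have r3 := reach_y α u (y + B * (y' - y) / (B - A)) (0 + A * (B * (y' - y) / (B - A)))
      (-(A * (y' - y) / (B - A)))
    have e1 : y + B * (y' - y) / (B - A) + -(A * (y' - y) / (B - A)) = y' := by
      field_simp; ring
    have e2 : 0 + A * (B * (y' - y) / (B - A)) + |u| ^ α * -(A * (y' - y) / (B - A)) = 0 := by
      rw [← hB]; ring
    rw [e1, e2] at r3
    have r4 := reach_x α u x' y' 0
    refine ⟨_, ?_, ((r1.trans r2).trans r3).trans r4⟩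
    have : |u - x'| ≤ R + |x - x'| := by
      have := abs_sub_le u x x'
      rw [abs_sub_comm u x] at this
      linarith
    nlinarith

/-- On the plane `z = 0` the CC distance is comparable with
`|x - x'| + |y - y'| + |x|^{1/2} |y' - y|^{1/2}`. -/
theorem ccDist_on_plane (α : ℝ) (hα : 1 ≤ α) :
    ∃ c C : ℝ, 0 < c ∧ 0 < C ∧ ∀ x y x' y' : ℝ,
      c * (|x - x'| + |y - y'| + |x| ^ ((1 : ℝ) / 2) * |y' - y| ^ ((1 : ℝ) / 2)) ≤
          ccDist α (x, y, 0) (x', y', 0) ∧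
        ccDist α (x, y, 0) (x', y', 0) ≤
          C * (|x - x'| + |y - y'| + |x| ^ ((1 : ℝ) / 2) * |y' - y| ^ ((1 : ℝ) / 2)) := by
  have h2 : (1:ℝ) ≤ 2 ^ (α - 1) := Real.one_le_rpow (by norm_num) (by linarith)
  set K : ℝ := α * 2 ^ (α - 1) with hKdef
  have hK1 : 1 ≤ K := by nlinarith
  refine ⟨1 / (2 + K), 2 ^ α + 3, by positivity, by positivity, fun x y x' y' => ?_⟩
  set R : ℝ := |x| ^ ((1 : ℝ) / 2) * |y' - y| ^ ((1 : ℝ) / 2) with hRdef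
  have hR : 0 ≤ R := by positivity
  have hR2 : R ^ 2 = |x| * |y' - y| := by
    rw [hRdef, ← Real.sqrt_eq_rpow, ← Real.sqrt_eq_rpow, mul_pow, Real.sq_sqrt (abs_nonneg _),
      Real.sq_sqrt (abs_nonneg _)]
  obtain ⟨T, hT, hr⟩ := reach_upper hα x y x' y' R hR hR2
  refine ⟨?_, hr.ccDist_le.trans hT⟩
  refine le_csInf ⟨T + 1, hr.mem (by linarith)⟩ ?_
  rintro S ⟨hS, γ, hγ, g0, g1⟩
  obtain ⟨l1, l2, l3⟩ := horizontal_lower hα hS hγ g0 g1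
  rw [← hR2, ← hKdef] at l3
  have l4 : R ≤ K * S := by
    apply abs_le_of_sq_le_sq' _ (by positivity) |>.2
    calc R ^ 2 ≤ K * S ^ 2 := l3
      _ ≤ K * (K * S ^ 2) := by nlinarith [mul_nonneg (by linarith : 0 ≤ K - 1) (by positivity : 0 ≤ K * S ^ 2)]
      _ = _ := by ring
  rw [div_mul_eq_mul_div, one_mul, div_le_iff₀ (by positivity)]
  nlinarith
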